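/- arXiv:2508.17470 — 2 statements merged into one kernel-verified Lean document; each statement's English description precedes it below -/
import Mathlib

section
/- Let 0 ≤ α < n, m ∈ ℕ with m > 1 − α/n, 0 < p ≤ 1, d_p = ⌊n(1/p − 1)⌋, and 1/q = 1/p − α/n, and let T_{α,m} be the discrete fractional series operator. Then there exists a constant C > 0, independent of the atom, such that for every (p,∞,d_p)-atom a centered at a discrete cube Q = {i : |i − i_0|_∞ ≤ N}, one has Σ_{k=1}^m Σ_{j ∈ Q*_k} |(T_{α,m} a)(j)|^q ≤ C, where Q*_k = {i ∈ ℤ^n : |i − A_k^{-1} i_0|_∞ ≤ 4DN} and D = max{‖A_k^{-1}‖ : k = 1, …, m}. -/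
open scoped ENNReal BigOperators Classical

noncomputable def eucZ {n : ℕ} (v : Fin n → ℤ) : ℝ :=
  Real.sqrt (∑ k, ((v k : ℝ)) ^ 2)

noncomputable def eucR {n : ℕ} (v : Fin n → ℝ) : ℝ :=
  Real.sqrt (∑ k, (v k) ^ 2)

noncomputable def lpNorm {n : ℕ} (p : ℝ) (b : (Fin n → ℤ) → ℝ) : ℝ≥0∞ :=
  (∑' i : Fin n → ℤ, ENNReal.ofReal |b i| ^ p) ^ (1 / p)

noncomputable def Tfs {n m : ℕ} (al : Fin m → ℝ) (A : Fin m → Matrix (Fin n) (Fin n) ℤ)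
    (b : (Fin n → ℤ) → ℝ) (j : Fin n → ℤ) : ℝ≥0∞ :=
  ∑' i : Fin n → ℤ,
    if ∀ k, i ≠ (A k).mulVec j then
      ENNReal.ofReal (|b i| / ∏ k, eucZ (i - (A k).mulVec j) ^ (al k))
    else 0

noncomputable def Mfr {n : ℕ} (γ : ℝ) (b : (Fin n → ℤ) → ℝ) (j : Fin n → ℤ) : ℝ≥0∞ :=
  ⨆ N : ℕ, ENNReal.ofReal ((2 * (N : ℝ) + 1) ^ (γ - (n : ℝ)) *
    ∑ i ∈ Finset.Icc (fun k => j k - (N : ℤ)) (fun k => j k + (N : ℤ)), |b i|)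

noncomputable def Iop {n : ℕ} (α : ℝ) (b : (Fin n → ℤ) → ℝ) (j : Fin n → ℤ) : ℝ≥0∞ :=
  ∑' i : Fin n → ℤ, if i ≠ j then ENNReal.ofReal (|b i| / eucZ (i - j) ^ ((n : ℝ) - α)) else 0

def IsPAtom {n : ℕ} (p : ℝ) (d : ℕ) (a : (Fin n → ℤ) → ℝ) (i0 : Fin n → ℤ) (N : ℕ) : Prop :=
  (∀ i : Fin n → ℤ, a i ≠ 0 → ∀ t, |i t - i0 t| ≤ (N : ℤ)) ∧
  (∀ i : Fin n → ℤ, |a i| ≤ ((2 * (N : ℝ) + 1) ^ n) ^ (-(1 / p))) ∧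
  (∀ β : Fin n → ℕ, (∑ t, β t) ≤ d →
    ∑ i ∈ Finset.Icc (fun t => i0 t - (N : ℤ)) (fun t => i0 t + (N : ℤ)),
      (∏ t, ((i t : ℝ)) ^ (β t)) * a i = 0)

/-
The bound is a pure size estimate. With `⟨v⟩ = max 1 ‖v‖`, the kernel of `T_{α,m}` is dominated, up
to a constant, by `⟨j⟩ ^ (-ε) * ∑ k, ⟨i - A k j⟩ ^ (-(n - α - ε))`. For `α > 0` one takes `ε = 0`
and bounds all factors of the kernel by the one with the smallest bracket. For `α = 0` a small
`ε > 0` is gained from an invertible difference `A k - A l`: since `‖(A k - A l) j‖ ≳ ‖j‖`, the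
point `i` cannot be close to both `A k j` and `A l j`, and the farther factor supplies the power of
`⟨j⟩`.

For `0 ≤ s < n` the sum of `⟨v - c⟩ ^ (-s)` over any set of at most `X` lattice points is
`O(X ^ (1 - s / n))`. Summing over the support of the atom, raising to the power `q` and summing
over a dilated cube, both of cardinality `O(X)`, gives `O(X ^ (1 + q * α / n))`. As
`1 + q * α / n = q / p`, this is exactly compensated by the normalization `X ^ (-1 / p)` of the
atom.
-/

section LatticeBox

variable {ι : Type*} [Fintype ι]

/-- The lattice points of the closed cube of real centre `c` and real radius `r` for the supremum
norm; it covers both the cube carrying an atom and the dilated cubes around `A_k⁻¹ i₀`, whose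
centres need not be integral. -/
noncomputable def latticeBox (c : ι → ℝ) (r : ℝ) : Finset (ι → ℤ) :=
  Fintype.piFinset fun t => Finset.Icc ⌈c t - r⌉ ⌊c t + r⌋

lemma mem_latticeBox {c : ι → ℝ} {r : ℝ} {v : ι → ℤ} :
    v ∈ latticeBox c r ↔ ∀ t, |(v t : ℝ) - c t| ≤ r := by
  simp only [latticeBox, Fintype.mem_piFinset, Finset.mem_Icc, Int.ceil_le, Int.le_floor]
  refine forall_congr' fun t => ?_
  rw [abs_sub_comm, abs_sub_le_iff, sub_le_comm (a := c t) (c := r),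
    sub_le_iff_le_add' (a := (v t : ℝ))]

lemma card_Icc_ceil_floor_le (c : ℝ) {r : ℝ} (hr : 0 ≤ r) :
    ((Finset.Icc ⌈c - r⌉ ⌊c + r⌋).card : ℝ) ≤ 2 * r + 1 := by
  have hcast (z : ℤ) : ((z.toNat : ℕ) : ℝ) = max (z : ℝ) 0 := by
    exact_mod_cast congrArg (Int.cast : ℤ → ℝ) (Int.toNat_eq_max z)
  rw [Int.card_Icc, hcast, max_le_iff]
  push_cast
  constructor <;> linarith [Int.le_ceil (c - r), Int.floor_le (c + r)]

lemma card_latticeBox_le (c : ι → ℝ) {r : ℝ} (hr : 0 ≤ r) :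
    ((latticeBox c r).card : ℝ) ≤ (2 * r + 1) ^ Fintype.card ι := by
  rw [latticeBox, Fintype.card_piFinset, Nat.cast_prod]
  calc ∏ t, ((Finset.Icc ⌈c t - r⌉ ⌊c t + r⌋).card : ℝ) ≤ ∏ _t : ι, (2 * r + 1) :=
        Finset.prod_le_prod (fun _ _ => Nat.cast_nonneg _) fun t _ =>
          card_Icc_ceil_floor_le (c t) hr
    _ = (2 * r + 1) ^ Fintype.card ι := by rw [Finset.prod_const, Finset.card_univ]

end LatticeBox

section JapaneseBracket

variable {E : Type*} [SeminormedAddGroup E]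

/-- The Japanese bracket `⟨v⟩ = max 1 ‖v‖`. On a lattice it is comparable to the norm off the
origin, and its negative powers need no case distinction at the origin. -/
noncomputable def japaneseBracket (v : E) : ℝ := max 1 ‖v‖

lemma one_le_japaneseBracket (v : E) : 1 ≤ japaneseBracket v := le_max_left _ _

lemma japaneseBracket_pos (v : E) : 0 < japaneseBracket v :=
  one_pos.trans_le (one_le_japaneseBracket v)

lemma norm_le_japaneseBracket (v : E) : ‖v‖ ≤ japaneseBracket v := le_max_right _ _

lemma japaneseBracket_rpow_nonneg (v : E) (s : ℝ) : 0 ≤ japaneseBracket v ^ s :=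
  Real.rpow_nonneg (japaneseBracket_pos v).le s

variable {ι : Type*} [Fintype ι]

lemma japaneseBracket_apply_le (v : ι → E) (t : ι) :
    japaneseBracket (v t) ≤ japaneseBracket v :=
  max_le_max_left 1 (norm_le_pi_norm v t)

lemma japaneseBracket_rpow_neg_le_prod [Nonempty ι] {s : ℝ} (hs : 0 ≤ s) (v : ι → E) :
    japaneseBracket v ^ (-s) ≤ ∏ t, japaneseBracket (v t) ^ (-(s / Fintype.card ι)) := by
  have hd : (Fintype.card ι : ℝ) ≠ 0 := by exact_mod_cast Fintype.card_ne_zero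
  calc japaneseBracket v ^ (-s) = ∏ _t : ι, japaneseBracket v ^ (-(s / Fintype.card ι)) := by
        rw [Finset.prod_const, Finset.card_univ, ← Real.rpow_natCast,
          ← Real.rpow_mul (japaneseBracket_pos v).le, neg_mul, div_mul_cancel₀ _ hd]
    _ ≤ ∏ t, japaneseBracket (v t) ^ (-(s / Fintype.card ι)) :=
        Finset.prod_le_prod (fun _ _ => japaneseBracket_rpow_nonneg _ _) fun t _ =>
          Real.rpow_le_rpow_of_nonpos (japaneseBracket_pos _) (japaneseBracket_apply_le v t)
            (neg_nonpos.2 (by positivity))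

end JapaneseBracket

section LatticeSums

lemma mul_add_one_rpow_neg_le {σ x : ℝ} (hσ0 : 0 ≤ σ) (hσ1 : σ ≤ 1) (hx : 0 ≤ x) :
    (1 - σ) * (x + 1) ^ (-σ) ≤ (x + 1) ^ (1 - σ) - x ^ (1 - σ) := by
  have hx1 : 0 < x + 1 := by positivity
  have bernoulli : (1 + -1 / (x + 1)) ^ (1 - σ) ≤ 1 + (1 - σ) * (-1 / (x + 1)) :=
    rpow_one_add_le_one_add_mul_self (by rw [le_div_iff₀ hx1]; linarith)
      (by linarith) (by linarith)
  have hquot : 1 + -1 / (x + 1) = x / (x + 1) := by field_simp; ring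
  have hsplit : (x + 1) ^ (1 - σ) = (x + 1) * (x + 1) ^ (-σ) := by
    rw [sub_eq_add_neg, Real.rpow_add hx1, Real.rpow_one]
  rw [hquot, Real.div_rpow hx hx1.le, div_le_iff₀ (by positivity)] at bernoulli
  have hexpand : (1 + (1 - σ) * (-1 / (x + 1))) * (x + 1) ^ (1 - σ) =
      (x + 1) ^ (1 - σ) - (1 - σ) * (x + 1) ^ (-σ) := by
    rw [hsplit]; field_simp; ring
  linarith

lemma sum_range_add_one_rpow_neg_le {σ : ℝ} (hσ0 : 0 ≤ σ) (hσ1 : σ < 1) (M : ℕ) :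
    ∑ x ∈ Finset.range M, ((x : ℝ) + 1) ^ (-σ) ≤ (M : ℝ) ^ (1 - σ) / (1 - σ) := by
  have hσ : 0 < 1 - σ := sub_pos.2 hσ1
  rw [le_div_iff₀' hσ, Finset.mul_sum]
  calc ∑ x ∈ Finset.range M, (1 - σ) * ((x : ℝ) + 1) ^ (-σ)
      ≤ ∑ x ∈ Finset.range M, (((x + 1 : ℕ) : ℝ) ^ (1 - σ) - (x : ℝ) ^ (1 - σ)) := by
        refine Finset.sum_le_sum fun x _ => ?_
        rw [Nat.cast_succ]
        exact mul_add_one_rpow_neg_le hσ0 hσ1.le x.cast_nonneg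
    _ = (M : ℝ) ^ (1 - σ) := by
        rw [Finset.sum_range_sub fun x : ℕ => (x : ℝ) ^ (1 - σ), Nat.cast_zero,
          Real.zero_rpow hσ.ne', sub_zero]

lemma sum_Icc_japaneseBracket_rpow_neg_le {σ : ℝ} (hσ0 : 0 ≤ σ) (hσ1 : σ < 1) {M : ℕ}
    (hM : 1 ≤ M) :
    ∑ x ∈ Finset.Icc (-M : ℤ) M, japaneseBracket x ^ (-σ) ≤
      3 / (1 - σ) * (M : ℝ) ^ (1 - σ) := by
  have hσ : 0 < 1 - σ := sub_pos.2 hσ1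
  have heven : Function.Even fun x : ℤ => japaneseBracket x ^ (-σ) := fun x => by
    simp only [japaneseBracket, norm_neg]
  have hzero : japaneseBracket (0 : ℤ) ^ (-σ) = 1 := by simp [japaneseBracket]
  have hsucc (x : ℕ) : japaneseBracket ((x + 1 : ℕ) : ℤ) ^ (-σ) = ((x : ℝ) + 1) ^ (-σ) := by
    rw [japaneseBracket, Int.norm_natCast, Nat.cast_succ, max_eq_right]
    linarith [x.cast_nonneg (α := ℝ)]
  have hone : 1 ≤ (M : ℝ) ^ (1 - σ) / (1 - σ) := by
    rw [one_le_div hσ]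
    linarith [Real.one_le_rpow (Nat.one_le_cast.2 hM : (1 : ℝ) ≤ M) hσ.le]
  rw [Finset.sum_Icc_of_even_eq_range heven, Finset.sum_range_succ']
  simp only [hsucc, Nat.cast_zero, hzero, nsmul_eq_mul, Nat.cast_ofNat]
  calc 2 * (∑ x ∈ Finset.range M, ((x : ℝ) + 1) ^ (-σ) + 1) - 1
      ≤ 3 * ((M : ℝ) ^ (1 - σ) / (1 - σ)) := by
        linarith [sum_range_add_one_rpow_neg_le hσ0 hσ1 M]
    _ = 3 / (1 - σ) * (M : ℝ) ^ (1 - σ) := by ring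

variable {ι : Type*} [Fintype ι]

lemma sum_latticeBox_japaneseBracket_rpow_neg_le {s : ℝ} (hs0 : 0 ≤ s)
    (hs : s < Fintype.card ι) {M : ℕ} (hM : 1 ≤ M) :
    ∑ v ∈ latticeBox (0 : ι → ℝ) M, japaneseBracket v ^ (-s) ≤
      (3 / (1 - s / Fintype.card ι)) ^ Fintype.card ι * (M : ℝ) ^ (Fintype.card ι - s) := by
  have hd : (0 : ℝ) < Fintype.card ι := hs0.trans_lt hs
  have : Nonempty ι := Fintype.card_pos_iff.1 (by exact_mod_cast hd)
  set σ : ℝ := s / Fintype.card ι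
  have hσ1 : σ < 1 := (div_lt_one hd).2 hs
  calc ∑ v ∈ latticeBox (0 : ι → ℝ) M, japaneseBracket v ^ (-s)
      ≤ ∑ v ∈ latticeBox (0 : ι → ℝ) M, ∏ t, japaneseBracket (v t) ^ (-σ) :=
        Finset.sum_le_sum fun v _ => japaneseBracket_rpow_neg_le_prod hs0 v
    _ = ∏ _t : ι, ∑ x ∈ Finset.Icc (-M : ℤ) M, japaneseBracket x ^ (-σ) := by
        rw [Finset.prod_univ_sum, latticeBox]
        simp only [Pi.zero_apply, zero_sub, zero_add, Int.ceil_neg, Int.floor_natCast]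
    _ ≤ ∏ _t : ι, 3 / (1 - σ) * (M : ℝ) ^ (1 - σ) :=
        Finset.prod_le_prod
          (fun _ _ => Finset.sum_nonneg fun _ _ => japaneseBracket_rpow_nonneg _ _)
          fun _ _ => sum_Icc_japaneseBracket_rpow_neg_le (by positivity) hσ1 hM
    _ = (3 / (1 - σ)) ^ Fintype.card ι * (M : ℝ) ^ (Fintype.card ι - s) := by
        rw [Finset.prod_const, Finset.card_univ, mul_pow, ← Real.rpow_mul_natCast M.cast_nonneg,
          sub_mul, one_mul, div_mul_cancel₀ _ hd.ne']

lemma japaneseBracket_rpow_neg_le_of_notMem_latticeBox {s R : ℝ} (hs : 0 ≤ s) (hR : 0 < R)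
    {v : ι → ℤ} (hv : v ∉ latticeBox (0 : ι → ℝ) ⌊R⌋₊) :
    japaneseBracket v ^ (-s) ≤ R ^ (-s) := by
  obtain ⟨t, ht⟩ : ∃ t, (⌊R⌋₊ : ℝ) < |(v t : ℝ)| := by
    simpa [mem_latticeBox] using hv
  refine Real.rpow_le_rpow_of_nonpos hR ?_ (neg_nonpos.2 hs)
  calc R ≤ (⌊R⌋₊ + 1 : ℝ) := (Nat.lt_floor_add_one R).le
    _ ≤ ‖v t‖ := by rw [Int.norm_eq_abs]; exact_mod_cast ht
    _ ≤ japaneseBracket v := (norm_le_pi_norm v t).trans (norm_le_japaneseBracket v)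

lemma sum_le_sum_add_card_mul {β : Type*} {f : β → ℝ} {τ : ℝ} (S T : Finset β)
    (hf : ∀ v, 0 ≤ f v) (hτ : 0 ≤ τ) (hT : ∀ v ∉ T, f v ≤ τ) :
    ∑ v ∈ S, f v ≤ ∑ v ∈ T, f v + S.card * τ := by
  rw [← Finset.sum_filter_add_sum_filter_not S (· ∈ T)]
  have hin : ∑ v ∈ S with v ∈ T, f v ≤ ∑ v ∈ T, f v :=
    Finset.sum_le_sum_of_subset_of_nonneg (fun v hv => (Finset.mem_filter.1 hv).2)
      fun v _ _ => hf v
  have hout : ∑ v ∈ S with v ∉ T, f v ≤ S.card * τ :=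
    calc ∑ v ∈ S with v ∉ T, f v ≤ ∑ _v ∈ S with _v ∉ T, τ :=
          Finset.sum_le_sum fun v hv => hT v (Finset.mem_filter.1 hv).2
      _ ≤ S.card * τ := by
          rw [Finset.sum_const, nsmul_eq_mul]
          gcongr
          exact Finset.filter_subset _ _
  exact add_le_add hin hout

/- Among the sets of at most `X` points, the box of radius `X ^ (1 / d)` maximizes the sum up to a
constant: outside it each term is at most `X ^ (-s / d)`. -/
lemma exists_sum_japaneseBracket_rpow_neg_le {s : ℝ} (hs0 : 0 ≤ s) (hs : s < Fintype.card ι) :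
    ∃ C : ℝ, 0 ≤ C ∧ ∀ (S : Finset (ι → ℤ)) (X : ℝ), 1 ≤ X → (S.card : ℝ) ≤ X →
      ∑ v ∈ S, japaneseBracket v ^ (-s) ≤ C * X ^ (1 - s / Fintype.card ι) := by
  have hd : (0 : ℝ) < Fintype.card ι := hs0.trans_lt hs
  have hsd : 0 < 1 - s / Fintype.card ι := sub_pos.2 ((div_lt_one hd).2 hs)
  set C : ℝ := (3 / (1 - s / Fintype.card ι)) ^ Fintype.card ι
  refine ⟨C + 1, by positivity, fun S X hX hS => ?_⟩
  have hX0 : 0 < X := one_pos.trans_le hX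
  set R : ℝ := X ^ (1 / Fintype.card ι : ℝ)
  have hR1 : 1 ≤ R := Real.one_le_rpow hX (by positivity)
  have hR0 : 0 < R := one_pos.trans_le hR1
  have hR_rpow (t : ℝ) : R ^ t = X ^ (t / Fintype.card ι) := by
    rw [← Real.rpow_mul hX0.le, one_div_mul_eq_div]
  have hnear : ∑ v ∈ latticeBox (0 : ι → ℝ) ⌊R⌋₊, japaneseBracket v ^ (-s) ≤
      C * X ^ (1 - s / Fintype.card ι) :=
    calc ∑ v ∈ latticeBox (0 : ι → ℝ) ⌊R⌋₊, japaneseBracket v ^ (-s)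
        ≤ C * (⌊R⌋₊ : ℝ) ^ (Fintype.card ι - s) :=
          sum_latticeBox_japaneseBracket_rpow_neg_le hs0 hs ((Nat.one_le_floor_iff R).2 hR1)
      _ ≤ C * R ^ (Fintype.card ι - s) := by
          gcongr
          exact Nat.floor_le hR0.le
      _ = C * X ^ (1 - s / Fintype.card ι) := by rw [hR_rpow, sub_div, div_self hd.ne']
  have hfar : (S.card : ℝ) * R ^ (-s) ≤ X ^ (1 - s / Fintype.card ι) := by
    rw [hR_rpow, neg_div, sub_eq_add_neg, Real.rpow_add hX0, Real.rpow_one]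
    gcongr
  calc ∑ v ∈ S, japaneseBracket v ^ (-s)
      ≤ ∑ v ∈ latticeBox (0 : ι → ℝ) ⌊R⌋₊, japaneseBracket v ^ (-s) + S.card * R ^ (-s) :=
        sum_le_sum_add_card_mul _ _ (fun v => japaneseBracket_rpow_nonneg v _) (by positivity)
          fun v hv => japaneseBracket_rpow_neg_le_of_notMem_latticeBox hs0 hR0 hv
    _ ≤ (C + 1) * X ^ (1 - s / Fintype.card ι) := by
        rw [add_mul, one_mul]
        exact add_le_add hnear hfar

lemma exists_sum_japaneseBracket_sub_rpow_neg_le {s : ℝ} (hs0 : 0 ≤ s)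
    (hs : s < Fintype.card ι) :
    ∃ C : ℝ, 0 ≤ C ∧ ∀ (S : Finset (ι → ℤ)) (X : ℝ), 1 ≤ X → (S.card : ℝ) ≤ X →
      ∀ c, ∑ v ∈ S, japaneseBracket (v - c) ^ (-s) ≤ C * X ^ (1 - s / Fintype.card ι) := by
  obtain ⟨C, hC, h⟩ := exists_sum_japaneseBracket_rpow_neg_le hs0 hs
  refine ⟨C, hC, fun S X hX hS c => ?_⟩
  simpa only [Finset.sum_map, Equiv.coe_toEmbedding, Equiv.subRight_apply] using
    h (S.map (Equiv.subRight c).toEmbedding) X hX (by rwa [Finset.card_map])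

end LatticeSums

section BracketKernel

variable {ι κ : Type*} [Fintype ι] [Fintype κ]

open scoped Matrix.Norms.Operator in
lemma exists_norm_le_mul_norm_mulVec [DecidableEq ι] {M : Matrix ι ι ℤ} (hM : M.det ≠ 0) :
    ∃ c : ℝ, 0 ≤ c ∧ ∀ j, ‖j‖ ≤ c * ‖M.mulVec j‖ := by
  refine ⟨‖M.adjugate‖, norm_nonneg _, fun j => ?_⟩
  have hdet_norm : 1 ≤ ‖M.det‖ := by
    rw [Int.norm_eq_abs]
    exact_mod_cast Int.one_le_abs hM
  have hadj : M.adjugate.mulVec (M.mulVec j) = M.det • j := by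
    rw [Matrix.mulVec_mulVec, Matrix.adjugate_mul, Matrix.smul_mulVec, Matrix.one_mulVec]
  calc ‖j‖ ≤ ‖M.det‖ * ‖j‖ := le_mul_of_one_le_left (norm_nonneg _) hdet_norm
    _ = ‖M.adjugate.mulVec (M.mulVec j)‖ := by rw [hadj, norm_smul]
    _ ≤ ‖M.adjugate‖ * ‖M.mulVec j‖ := Matrix.linfty_opNorm_mulVec _ _

lemma exists_japaneseBracket_le_mul_max [DecidableEq ι] {A B : Matrix ι ι ℤ}
    (h : (A - B).det ≠ 0) :
    ∃ c : ℝ, 0 < c ∧ ∀ i j, japaneseBracket j ≤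
      c * max (japaneseBracket (i - A.mulVec j)) (japaneseBracket (i - B.mulVec j)) := by
  obtain ⟨c, hc0, hc⟩ := exists_norm_le_mul_norm_mulVec h
  refine ⟨1 + 2 * c, by positivity, fun i j => ?_⟩
  set μ := max (japaneseBracket (i - A.mulVec j)) (japaneseBracket (i - B.mulVec j))
  have hμ : 1 ≤ μ := (one_le_japaneseBracket _).trans (le_max_left _ _)
  have hA : ‖i - A.mulVec j‖ ≤ μ := (norm_le_japaneseBracket _).trans (le_max_left _ _)
  have hB : ‖i - B.mulVec j‖ ≤ μ := (norm_le_japaneseBracket _).trans (le_max_right _ _)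
  have hdiff : ‖(A - B).mulVec j‖ ≤ 2 * μ :=
    calc ‖(A - B).mulVec j‖ = ‖(i - B.mulVec j) - (i - A.mulVec j)‖ := by
          rw [Matrix.sub_mulVec, sub_sub_sub_cancel_left]
      _ ≤ ‖i - B.mulVec j‖ + ‖i - A.mulVec j‖ := norm_sub_le _ _
      _ ≤ 2 * μ := by linarith
  have hnorm : ‖j‖ ≤ c * (2 * μ) := (hc j).trans (mul_le_mul_of_nonneg_left hdiff hc0)
  have hcμ : 0 ≤ c * μ := by positivity
  exact max_le (by linarith) (by linarith)

lemma prod_rpow_neg_le {x a : κ → ℝ} {μ ν ε : ℝ} {l : κ} (hμ : 0 < μ) (hx : ∀ k, μ ≤ x k)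
    (ha : ∀ k, 0 ≤ a k) (hν : 0 < ν) (hνl : ν ≤ x l) (hε : 0 ≤ ε) (hεl : ε ≤ a l) :
    ∏ k, x k ^ (-a k) ≤ ν ^ (-ε) * μ ^ (-(∑ k, a k - ε)) := by
  have hx0 (k : κ) : 0 < x k := hμ.trans_le (hx k)
  have hrest : ∏ k ∈ Finset.univ.erase l, x k ^ (-a k) ≤ ∏ k ∈ Finset.univ.erase l, μ ^ (-a k) :=
    Finset.prod_le_prod (fun k _ => Real.rpow_nonneg (hx0 k).le _) fun k _ =>
      Real.rpow_le_rpow_of_nonpos hμ (hx k) (neg_nonpos.2 (ha k))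
  have hl : x l ^ (-a l) ≤ ν ^ (-ε) * μ ^ (-(a l - ε)) :=
    calc x l ^ (-a l) = x l ^ (-ε) * x l ^ (-(a l - ε)) := by
          rw [← Real.rpow_add (hx0 l)]
          congr 1
          ring
      _ ≤ ν ^ (-ε) * μ ^ (-(a l - ε)) :=
          mul_le_mul (Real.rpow_le_rpow_of_nonpos hν hνl (neg_nonpos.2 hε))
            (Real.rpow_le_rpow_of_nonpos hμ (hx l) (by linarith))
            (Real.rpow_nonneg (hx0 l).le _) (by positivity)
  have hsum : ∑ k, a k = a l + ∑ k ∈ Finset.univ.erase l, a k :=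
    (Finset.add_sum_erase _ a (Finset.mem_univ l)).symm
  calc ∏ k, x k ^ (-a k) = x l ^ (-a l) * ∏ k ∈ Finset.univ.erase l, x k ^ (-a k) :=
        (Finset.mul_prod_erase _ _ (Finset.mem_univ l)).symm
    _ ≤ ν ^ (-ε) * μ ^ (-(a l - ε)) * ∏ k ∈ Finset.univ.erase l, μ ^ (-a k) :=
        mul_le_mul hl hrest (Finset.prod_nonneg fun k _ => Real.rpow_nonneg (hx0 k).le _)
          (by positivity)
    _ = ν ^ (-ε) * μ ^ (-(∑ k, a k - ε)) := by
        rw [mul_assoc, ← Real.rpow_sum_of_pos hμ, ← Real.rpow_add hμ, Finset.sum_neg_distrib, hsum]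
        congr 2
        ring

/-- The kernel of `Tfs` with each Euclidean distance replaced by a Japanese bracket: it dominates
the kernel of `Tfs`, and is also defined where the latter is singular. -/
noncomputable def bracketKernel (al : κ → ℝ) (A : κ → Matrix ι ι ℤ) (i j : ι → ℤ) : ℝ :=
  ∏ k, japaneseBracket (i - (A k).mulVec j) ^ (-al k)

lemma bracketKernel_nonneg (al : κ → ℝ) (A : κ → Matrix ι ι ℤ) (i j : ι → ℤ) :
    0 ≤ bracketKernel al A i j :=
  Finset.prod_nonneg fun _ _ => japaneseBracket_rpow_nonneg _ _

lemma bracketKernel_le {al : κ → ℝ} {A : κ → Matrix ι ι ℤ} {i j : ι → ℤ} {ν ε : ℝ} {l : κ}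
    (hal : ∀ k, 0 ≤ al k) (hν : 0 < ν) (hνl : ν ≤ japaneseBracket (i - (A l).mulVec j))
    (hε : 0 ≤ ε) (hεl : ε ≤ al l) :
    bracketKernel al A i j ≤
      ν ^ (-ε) * ∑ k, japaneseBracket (i - (A k).mulVec j) ^ (-(∑ k, al k - ε)) := by
  have : Nonempty κ := ⟨l⟩
  obtain ⟨k₀, hk₀⟩ := Finite.exists_min fun k => japaneseBracket (i - (A k).mulVec j)
  refine (prod_rpow_neg_le (japaneseBracket_pos _) hk₀ hal hν hνl hε hεl).trans ?_
  gcongr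
  exact Finset.single_le_sum
    (f := fun k => japaneseBracket (i - (A k).mulVec j) ^ (-(∑ k, al k - ε)))
    (fun _ _ => japaneseBracket_rpow_nonneg _ _) (Finset.mem_univ k₀)

lemma exists_bracketKernel_le_of_det_sub_ne_zero [DecidableEq ι] {al : κ → ℝ}
    {A : κ → Matrix ι ι ℤ} {ε : ℝ} {k l : κ} (hal : ∀ k, 0 ≤ al k) (h : (A k - A l).det ≠ 0)
    (hε : 0 ≤ ε) (hεk : ε ≤ al k) (hεl : ε ≤ al l) :
    ∃ B : ℝ, 0 ≤ B ∧ ∀ i j, bracketKernel al A i j ≤ B * japaneseBracket j ^ (-ε) *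
      ∑ k, japaneseBracket (i - (A k).mulVec j) ^ (-(∑ k, al k - ε)) := by
  obtain ⟨c, hc0, hc⟩ := exists_japaneseBracket_le_mul_max h
  refine ⟨c ^ ε, by positivity, fun i j => ?_⟩
  have hν : 0 < japaneseBracket j / c := div_pos (japaneseBracket_pos j) hc0
  have hν_rpow : (japaneseBracket j / c) ^ (-ε) = c ^ ε * japaneseBracket j ^ (-ε) := by
    rw [Real.div_rpow (japaneseBracket_pos j).le hc0.le, Real.rpow_neg hc0.le, div_inv_eq_mul,
      mul_comm]
  rw [← hν_rpow]
  rcases le_max_iff.1 ((div_le_iff₀' hc0).2 (hc i j)) with hk | hl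
  · exact bracketKernel_le hal hν hk hε hεk
  · exact bracketKernel_le hal hν hl hε hεl

/- For `0 < α` one takes `ε = 0`, and `i ↦ ⟨i - A k j⟩ ^ (-(d - α))` is already subcritical. For
`α = 0` this exponent is critical, and a small power `ε` is moved from `i` to `j`. -/
lemma exists_bracketKernel_le [DecidableEq ι] {al : κ → ℝ} {A : κ → Matrix ι ι ℤ} {α q : ℝ}
    (hα0 : 0 ≤ α) (hαd : α < Fintype.card ι) (hal : ∀ k, 0 < al k)
    (hsum : ∑ k, al k = Fintype.card ι - α) (hA : α = 0 → ∃ k l, (A k - A l).det ≠ 0)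
    (hq : 0 < q) :
    ∃ ε B : ℝ, 0 ≤ ε ∧ ε * q < Fintype.card ι ∧ 0 ≤ Fintype.card ι - α - ε ∧ 0 < α + ε ∧
      0 ≤ B ∧ ∀ i j, bracketKernel al A i j ≤ B * japaneseBracket j ^ (-ε) *
        ∑ k, japaneseBracket (i - (A k).mulVec j) ^ (-(Fintype.card ι - α - ε)) := by
  have hal' (k : κ) : 0 ≤ al k := (hal k).le
  have hd : (0 : ℝ) < Fintype.card ι := hα0.trans_lt hαd
  rw [← hsum]
  rcases hα0.eq_or_lt with hα | hα
  · obtain ⟨k, l, hkl⟩ := hA hα.symm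
    set ε : ℝ := min (min (al k) (al l)) (Fintype.card ι / (2 * q))
    have hε : 0 < ε := lt_min (lt_min (hal k) (hal l)) (by positivity)
    have hεk : ε ≤ al k := (min_le_left _ _).trans (min_le_left _ _)
    have hεl : ε ≤ al l := (min_le_left _ _).trans (min_le_right _ _)
    have hεq : ε * (2 * q) ≤ Fintype.card ι :=
      (le_div_iff₀ (by positivity)).1 (min_le_right _ _)
    have hεsum : ε ≤ ∑ k, al k :=
      hεk.trans (Finset.single_le_sum (fun k _ => hal' k) (Finset.mem_univ k))
    obtain ⟨B, hB, hK⟩ := exists_bracketKernel_le_of_det_sub_ne_zero hal' hkl hε.le hεk hεl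
    exact ⟨ε, B, hε.le, by linarith, by linarith, by linarith, hB, hK⟩
  · obtain ⟨l, -, -⟩ : ∃ l ∈ Finset.univ, al l ≠ 0 :=
      Finset.exists_ne_zero_of_sum_ne_zero (by rw [hsum]; exact (sub_pos.2 hαd).ne')
    refine ⟨0, 1, le_rfl, by linarith, by linarith, by linarith, zero_le_one, fun i j => ?_⟩
    simpa using bracketKernel_le hal' one_pos (one_le_japaneseBracket (i - (A l).mulVec j))
      le_rfl (hal' l)

lemma exists_sum_rpow_sum_le {K : (ι → ℤ) → (ι → ℤ) → ℝ} {y : κ → (ι → ℤ) → ι → ℤ}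
    {σ ε q B : ℝ} (hσ0 : 0 ≤ σ) (hσd : σ < Fintype.card ι) (hε : 0 ≤ ε)
    (hεq : ε * q < Fintype.card ι) (hq : 0 < q) (hB : 0 ≤ B) (hK0 : ∀ i j, 0 ≤ K i j)
    (hK : ∀ i j, K i j ≤
      B * japaneseBracket j ^ (-ε) * ∑ k, japaneseBracket (i - y k j) ^ (-σ)) :
    ∃ C : ℝ, 0 ≤ C ∧ ∀ (S S' : Finset (ι → ℤ)) (X : ℝ), 1 ≤ X →
      (S.card : ℝ) ≤ X → (S'.card : ℝ) ≤ X →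
      ∑ j ∈ S', (∑ i ∈ S, K i j) ^ q ≤ C * X ^ (1 + q * (1 - (σ + ε) / Fintype.card ι)) := by
  obtain ⟨C₁, hC₁, h₁⟩ := exists_sum_japaneseBracket_sub_rpow_neg_le hσ0 hσd
  obtain ⟨C₂, hC₂, h₂⟩ :=
    exists_sum_japaneseBracket_rpow_neg_le (ι := ι) (mul_nonneg hε hq.le) hεq
  set b : ℝ := B * (Fintype.card κ * C₁)
  have hb : 0 ≤ b := by positivity
  refine ⟨b ^ q * C₂, by positivity, fun S S' X hX hS hS' => ?_⟩
  have hX0 : 0 < X := one_pos.trans_le hX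
  have hinner (j : ι → ℤ) : ∑ i ∈ S, K i j ≤
      b * X ^ (1 - σ / Fintype.card ι) * japaneseBracket j ^ (-ε) :=
    calc ∑ i ∈ S, K i j
        ≤ ∑ i ∈ S, B * japaneseBracket j ^ (-ε) * ∑ k, japaneseBracket (i - y k j) ^ (-σ) :=
          Finset.sum_le_sum fun i _ => hK i j
      _ = B * japaneseBracket j ^ (-ε) * ∑ k, ∑ i ∈ S, japaneseBracket (i - y k j) ^ (-σ) := by
          rw [← Finset.mul_sum, Finset.sum_comm]
      _ ≤ B * japaneseBracket j ^ (-ε) * ∑ _k : κ, C₁ * X ^ (1 - σ / Fintype.card ι) := by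
          have := japaneseBracket_rpow_nonneg j (-ε)
          gcongr with k
          exact h₁ S X hX hS (y k j)
      _ = b * X ^ (1 - σ / Fintype.card ι) * japaneseBracket j ^ (-ε) := by
          rw [Finset.sum_const, Finset.card_univ, nsmul_eq_mul]
          ring
  calc ∑ j ∈ S', (∑ i ∈ S, K i j) ^ q
      ≤ ∑ j ∈ S', (b * X ^ (1 - σ / Fintype.card ι) * japaneseBracket j ^ (-ε)) ^ q :=
        Finset.sum_le_sum fun j _ =>
          Real.rpow_le_rpow (Finset.sum_nonneg fun i _ => hK0 i j) (hinner j) hq.le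
    _ = b ^ q * X ^ ((1 - σ / Fintype.card ι) * q) *
          ∑ j ∈ S', japaneseBracket j ^ (-(ε * q)) := by
        rw [Finset.mul_sum]
        refine Finset.sum_congr rfl fun j _ => ?_
        rw [Real.mul_rpow (by positivity) (japaneseBracket_rpow_nonneg _ _),
          Real.mul_rpow hb (by positivity), ← Real.rpow_mul hX0.le,
          ← Real.rpow_mul (japaneseBracket_pos j).le, neg_mul]
    _ ≤ b ^ q * X ^ ((1 - σ / Fintype.card ι) * q) * (C₂ * X ^ (1 - ε * q / Fintype.card ι)) :=
        mul_le_mul_of_nonneg_left (h₂ S' X hX hS') (by positivity)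
    _ = b ^ q * C₂ * X ^ (1 + q * (1 - (σ + ε) / Fintype.card ι)) := by
        rw [mul_mul_mul_comm, ← Real.rpow_add hX0]
        congr 2
        ring

end BracketKernel

section FractionalSeries

variable {n m : ℕ} {al : Fin m → ℝ} {A : Fin m → Matrix (Fin n) (Fin n) ℤ}

lemma eucZ_nonneg (v : Fin n → ℤ) : 0 ≤ eucZ v := Real.sqrt_nonneg _

lemma norm_le_eucZ (v : Fin n → ℤ) : ‖v‖ ≤ eucZ v := by
  refine (pi_norm_le_iff_of_nonneg (eucZ_nonneg _)).2 fun t => ?_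
  rw [Int.norm_eq_abs]
  exact Real.abs_le_sqrt (Finset.single_le_sum (f := fun k => (v k : ℝ) ^ 2)
    (fun _ _ => sq_nonneg _) (Finset.mem_univ t))

lemma japaneseBracket_le_eucZ {v : Fin n → ℤ} (hv : v ≠ 0) : japaneseBracket v ≤ eucZ v := by
  obtain ⟨t, ht⟩ := Function.ne_iff.1 hv
  have hcoord : 1 ≤ ‖v t‖ := by
    rw [Int.norm_eq_abs]
    exact_mod_cast Int.one_le_abs ht
  exact max_le (hcoord.trans ((norm_le_pi_norm v t).trans (norm_le_eucZ v))) (norm_le_eucZ v)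

lemma inv_prod_eucZ_rpow_le_bracketKernel (hal : ∀ k, 0 ≤ al k) {i j : Fin n → ℤ}
    (h : ∀ k, i ≠ (A k).mulVec j) :
    (∏ k, eucZ (i - (A k).mulVec j) ^ al k)⁻¹ ≤ bracketKernel al A i j := by
  rw [← Finset.prod_inv_distrib, bracketKernel]
  refine Finset.prod_le_prod
    (fun k _ => inv_nonneg.2 (Real.rpow_nonneg (eucZ_nonneg _) _)) fun k _ => ?_
  rw [← Real.rpow_neg (eucZ_nonneg _)]
  exact Real.rpow_le_rpow_of_nonpos (japaneseBracket_pos _)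
    (japaneseBracket_le_eucZ (sub_ne_zero.2 (h k))) (neg_nonpos.2 (hal k))

lemma Tfs_le_ofReal_sum_bracketKernel (hal : ∀ k, 0 ≤ al k) {a : (Fin n → ℤ) → ℝ} {w : ℝ}
    {S : Finset (Fin n → ℤ)} (hsupp : ∀ i ∉ S, a i = 0) (hw : ∀ i, |a i| ≤ w) (j : Fin n → ℤ) :
    Tfs al A a j ≤ ENNReal.ofReal (w * ∑ i ∈ S, bracketKernel al A i j) := by
  have hw0 : 0 ≤ w := (abs_nonneg _).trans (hw 0)
  rw [Tfs, tsum_eq_sum (s := S) fun i hi => by simp [hsupp i hi], Finset.mul_sum,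
    ENNReal.ofReal_sum_of_nonneg fun i _ => mul_nonneg hw0 (bracketKernel_nonneg _ _ _ _)]
  refine Finset.sum_le_sum fun i _ => ?_
  split_ifs with h
  · rw [div_eq_mul_inv]
    have hprod : 0 ≤ ∏ k, eucZ (i - (A k).mulVec j) ^ al k :=
      Finset.prod_nonneg fun k _ => Real.rpow_nonneg (eucZ_nonneg _) _
    exact ENNReal.ofReal_le_ofReal (mul_le_mul (hw i)
      (inv_prod_eucZ_rpow_le_bracketKernel hal h) (inv_nonneg.2 hprod) hw0)
  · exact zero_le

lemma rpow_neg_one_div_rpow_mul_rpow {V Λ p q β : ℝ} (hV : 0 < V) (hΛ : 0 ≤ Λ) (hq : q ≠ 0)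
    (hpq : 1 / q = 1 / p - β) :
    (V ^ (-(1 / p))) ^ q * (Λ * V) ^ (1 + q * β) = Λ ^ (1 + q * β) := by
  have hexp : -(1 / p) * q + (1 + q * β) = 0 := by
    rw [show 1 / p = 1 / q + β by linarith]
    field_simp
    ring
  rw [Real.mul_rpow hΛ hV.le, ← Real.rpow_mul hV.le, mul_left_comm, ← Real.rpow_add hV, hexp,
    Real.rpow_zero, mul_one]

lemma exists_sum_Tfs_rpow_le {α p q Λ : ℝ} (hα0 : 0 ≤ α) (hαn : α < n) (hal : ∀ k, 0 < al k)
    (hsum : ∑ k, al k = n - α) (hA : α = 0 → ∃ k l, (A k - A l).det ≠ 0) (hq0 : 0 < q)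
    (hq : 1 / q = 1 / p - α / n) (hΛ : 1 ≤ Λ) :
    ∃ C : ℝ, 0 ≤ C ∧ ∀ (S S' : Finset (Fin n → ℤ)) (V : ℝ) (a : (Fin n → ℤ) → ℝ), 1 ≤ V →
      (S.card : ℝ) ≤ Λ * V → (S'.card : ℝ) ≤ Λ * V → (∀ i ∉ S, a i = 0) →
      (∀ i, |a i| ≤ V ^ (-(1 / p))) → ∑ j ∈ S', Tfs al A a j ^ q ≤ ENNReal.ofReal C := by
  obtain ⟨ε, B, hε, hεq, hσ0, hαε, hB, hK⟩ := exists_bracketKernel_le (ι := Fin n) (α := α) hα0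
    (by rwa [Fintype.card_fin]) hal (by rwa [Fintype.card_fin]) hA hq0
  obtain ⟨C, hC, hmain⟩ := exists_sum_rpow_sum_le hσ0 (by linarith) hε hεq hq0 hB
    (bracketKernel_nonneg al A) hK
  have hn : (n : ℝ) ≠ 0 := (hα0.trans_lt hαn).ne'
  have hexp : 1 - (Fintype.card (Fin n) - α - ε + ε) / Fintype.card (Fin n) = α / n := by
    rw [Fintype.card_fin]
    field_simp
    ring
  simp only [hexp] at hmain
  refine ⟨C * Λ ^ (1 + q * (α / n)), by positivity, fun S S' V a hV hS hS' hsupp ha => ?_⟩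
  have hV0 : 0 < V := one_pos.trans_le hV
  set w : ℝ := V ^ (-(1 / p))
  have hw0 : 0 ≤ w := by positivity
  have hT0 (j : Fin n → ℤ) : 0 ≤ ∑ i ∈ S, bracketKernel al A i j :=
    Finset.sum_nonneg fun i _ => bracketKernel_nonneg _ _ _ _
  calc ∑ j ∈ S', Tfs al A a j ^ q
      ≤ ∑ j ∈ S', ENNReal.ofReal (w ^ q * (∑ i ∈ S, bracketKernel al A i j) ^ q) := by
        refine Finset.sum_le_sum fun j _ => ?_
        rw [← Real.mul_rpow hw0 (hT0 j),
          ← ENNReal.ofReal_rpow_of_nonneg (mul_nonneg hw0 (hT0 j)) hq0.le]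
        exact ENNReal.rpow_le_rpow
          (Tfs_le_ofReal_sum_bracketKernel (fun k => (hal k).le) hsupp ha j) hq0.le
    _ = ENNReal.ofReal (w ^ q * ∑ j ∈ S', (∑ i ∈ S, bracketKernel al A i j) ^ q) := by
        rw [Finset.mul_sum, ENNReal.ofReal_sum_of_nonneg fun j _ =>
          mul_nonneg (by positivity) (Real.rpow_nonneg (hT0 j) _)]
    _ ≤ ENNReal.ofReal (w ^ q * (C * (Λ * V) ^ (1 + q * (α / n)))) := by
        gcongr
        exact hmain S S' (Λ * V) (one_le_mul_of_one_le_of_one_le hΛ hV) hS hS'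
    _ = ENNReal.ofReal (C * Λ ^ (1 + q * (α / n))) := by
        rw [mul_left_comm, rpow_neg_one_div_rpow_mul_rpow hV0 (by positivity) hq0.ne' hq]

lemma pos_of_one_div_eq_one_div_sub {p q β : ℝ} (hp0 : 0 < p) (hp1 : p ≤ 1) (hβ : β < 1)
    (hq : 1 / q = 1 / p - β) : 0 < q := by
  rw [← one_div_pos, hq]
  linarith [one_le_one_div hp0 hp1]

theorem stmt10_general {α p q r : ℝ} (hα0 : 0 ≤ α) (hαn : α < n) (hal : ∀ k, 0 < al k)
    (hsum : ∑ k, al k = n - α) (hA : α = 0 → ∃ k l, (A k - A l).det ≠ 0) (hq0 : 0 < q)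
    (hq : 1 / q = 1 / p - α / n) (hr : 0 ≤ r) :
    ∃ C : ℝ, 0 < C ∧ ∀ (i0 : Fin n → ℤ) (N : ℕ) (a : (Fin n → ℤ) → ℝ) (c : Fin m → Fin n → ℝ),
      (∀ i, a i ≠ 0 → ∀ t, |i t - i0 t| ≤ (N : ℤ)) →
      (∀ i, |a i| ≤ ((2 * (N : ℝ) + 1) ^ n) ^ (-(1 / p))) →
      (∑ k : Fin m, ∑' j : Fin n → ℤ,
          if ∀ t, |(j t : ℝ) - c k t| ≤ r * N then Tfs al A a j ^ q else 0)
        ≤ ENNReal.ofReal C := by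
  obtain ⟨C, hC, hmain⟩ := exists_sum_Tfs_rpow_le hα0 hαn hal hsum hA hq0 hq
    (one_le_pow₀ (le_add_of_nonneg_left hr) : 1 ≤ (r + 1) ^ n)
  refine ⟨m * C + 1, by positivity, fun i0 N a c hsupp ha => ?_⟩
  have hcard (x : Fin n → ℝ) {ρ : ℝ} (hρ0 : 0 ≤ ρ) (hρ : 2 * ρ + 1 ≤ (r + 1) * (2 * N + 1)) :
      ((latticeBox x ρ).card : ℝ) ≤ (r + 1) ^ n * (2 * N + 1) ^ n := by
    refine (card_latticeBox_le x hρ0).trans ?_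
    rw [Fintype.card_fin, ← mul_pow]
    gcongr
  have hN : (0 : ℝ) ≤ N := N.cast_nonneg
  have hrN : 0 ≤ r * N := mul_nonneg hr hN
  have hsupp' : ∀ i ∉ latticeBox (fun t => (i0 t : ℝ)) N, a i = 0 := fun i hi => by
    by_contra hai
    exact hi (mem_latticeBox.2 fun t => by exact_mod_cast hsupp i hai t)
  have hk (k : Fin m) : (∑' j : Fin n → ℤ,
      if ∀ t, |(j t : ℝ) - c k t| ≤ r * N then Tfs al A a j ^ q else 0) ≤ ENNReal.ofReal C := by
    simp only [← mem_latticeBox]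
    rw [tsum_eq_sum fun j hj => if_neg hj, Finset.sum_ite_mem, Finset.inter_self]
    exact hmain _ _ ((2 * N + 1) ^ n) a (one_le_pow₀ (by linarith))
      (hcard _ hN (by linarith)) (hcard _ hrN (by linarith)) hsupp' ha
  calc _ ≤ ∑ _k : Fin m, ENNReal.ofReal C := Finset.sum_le_sum fun k _ => hk k
    _ = ENNReal.ofReal (m * C) := by
        rw [Finset.sum_const, Finset.card_univ, Fintype.card_fin, nsmul_eq_mul,
          ENNReal.ofReal_mul m.cast_nonneg, ENNReal.ofReal_natCast]
    _ ≤ ENNReal.ofReal (m * C + 1) := ENNReal.ofReal_le_ofReal (le_add_of_nonneg_right zero_le_one)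

end FractionalSeries

theorem stmt10 (n : ℕ) (hn : 1 ≤ n) (α : ℝ) (hα0 : 0 ≤ α) (hαn : α < n)
    (m : ℕ) (hm : 1 - α / n < m)
    (al : Fin m → ℝ) (hal : ∀ k, 0 < al k) (hsum : ∑ k, al k = n - α)
    (A : Fin m → Matrix (Fin n) (Fin n) ℤ) (hA : ∀ k, (A k).det ≠ 0)
    (hA0 : α = 0 → ∀ k l, k ≠ l → (A k - A l).det ≠ 0)
    (p : ℝ) (hp0 : 0 < p) (hp1 : p ≤ 1)
    (dp : ℕ) (hdp : dp = ⌊(n : ℝ) * (1 / p - 1)⌋₊)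
    (q : ℝ) (hq : 1 / q = 1 / p - α / n)
    (D : ℝ)
    (hD : IsGreatest {r : ℝ | ∃ (k : Fin m) (x : Fin n → ℝ), eucR x = 1 ∧
        r = eucR ((((A k).map (Int.cast : ℤ → ℝ))⁻¹).mulVec x)} D) :
    ∃ C : ℝ, 0 < C ∧ ∀ (i0 : Fin n → ℤ) (N : ℕ) (a : (Fin n → ℤ) → ℝ),
      IsPAtom p dp a i0 N →
      (∑ k : Fin m, ∑' j : Fin n → ℤ,
          if ∀ t, |(j t : ℝ) -
              (((A k).map (Int.cast : ℤ → ℝ))⁻¹).mulVec (fun s => (i0 s : ℝ)) t| ≤ 4 * D * N then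
            (Tfs al A a j) ^ q
          else 0)
        ≤ ENNReal.ofReal C := by
  have hq0 : 0 < q :=
    pos_of_one_div_eq_one_div_sub hp0 hp1 ((div_lt_one (hα0.trans_lt hαn)).2 hαn) hq
  have hpair : α = 0 → ∃ k l, (A k - A l).det ≠ 0 := fun h => by
    have : Nontrivial (Fin m) :=
      Fin.nontrivial_iff_two_le.2 (by simpa [h, Nat.succ_le_iff] using hm)
    obtain ⟨k, l, hkl⟩ := exists_pair_ne (Fin m)
    exact ⟨k, l, hA0 h k l hkl⟩
  have hD0 : 0 ≤ D := let ⟨_, _, _, hDx⟩ := hD.1; hDx ▸ Real.sqrt_nonneg _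
  obtain ⟨C, hC, h⟩ := stmt10_general hα0 hαn hal hsum hpair hq0 hq (mul_nonneg zero_le_four hD0)
  exact ⟨C, hC, fun i0 N a ha => h i0 N a _ ha.1 ha.2.1⟩
end

section
/- Let 0 ≤ α < n, 0 < p ≤ 1, d_p = ⌊n(1/p − 1)⌋, and 1/q = 1/p − α/n. Then there exists a constant C > 0 such that for every discrete cube Q = {i ∈ ℤ^n : |i − i_0|_∞ ≤ N}, one has Σ_{j ∈ ℤ^n} ( M_{αn/(n+d_p+1)}(χ_Q)(j) )^{q(n+d_p+1)/n} ≤ C (#Q)^{q/p}, where χ_Q is the characteristic sequence of Q and #Q = (2N+1)^n. -/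
open scoped ENNReal BigOperators Classical

/-! Put `L = 2N + 1` and let `|·|` be the sup norm. If the cube of radius `K` around `j` meets `Q`,
then `L + |j - i₀| ≤ 2 max(2K+1, L)`, and at most `min(2K+1, L)^n` points of `Q` lie in it. As
`0 ≤ γ ≤ n`, every average defining `M_γ(χ_Q)(j)` is therefore at most a constant times
`L^n (L + |j - i₀|)^(γ - n)`. Tiling `ℤ^n` by cubes of side `L` compares the sum over `j` of the
`s`-th power of this bound with the convergent series `∑ (1 + |a|)^(-(n - γ)s)`, where
`(n - γ)s > n`. For `γ = αn/D` and `s = qD/n` one has `(n - γ)s = q(D - α)`, so this last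
condition is `n/p < D`. -/

section LatticeSums

variable {ι : Type*} [Fintype ι]

lemma summable_norm_rpow_pi_int {r : ℝ} (hr : r < -Fintype.card ι) :
    Summable fun a : ι → ℤ => ‖a‖ ^ r := by
  let basis := (Pi.basisFun ℝ ι).restrictScalars ℤ
  have norm_symm (a : ι → ℤ) : ‖basis.equivFun.symm a‖ = ‖a‖ := by
    have coe_symm : (basis.equivFun.symm a : ι → ℝ) = fun k => (a k : ℝ) := by
      ext k
      simp [basis, Module.Basis.equivFun_symm_apply, Pi.single_apply]
    rw [Submodule.coe_norm, coe_symm]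
    simp only [Pi.norm_def, nnnorm, Int.norm_eq_abs, Real.norm_eq_abs]
  have summable_lattice := ZLattice.summable_norm_rpow
    (Submodule.span ℤ (Set.range (Pi.basisFun ℝ ι))) r
    (by rwa [Module.finrank_eq_card_basis basis])
  simpa only [Function.comp_def, LinearEquiv.coe_toEquiv, norm_symm] using
    basis.equivFun.symm.toEquiv.summable_iff.mpr summable_lattice

lemma summable_one_add_norm_rpow_pi_int {τ : ℝ} (hτ : Fintype.card ι < τ) :
    Summable fun a : ι → ℤ => (1 + ‖a‖) ^ (-τ) := by
  refine (summable_norm_rpow_pi_int (neg_lt_neg hτ)).of_norm_bounded_eventually ?_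
  filter_upwards [(Set.finite_singleton (0 : ι → ℤ)).eventually_cofinite_notMem] with a ha
  have norm_pos : 0 < ‖a‖ := norm_pos_iff.mpr ha
  have hτ0 : 0 ≤ τ := (Nat.cast_nonneg _).trans hτ.le
  rw [Real.norm_of_nonneg (by positivity)]
  exact Real.rpow_le_rpow_of_nonpos norm_pos (by linarith) (neg_nonpos.mpr hτ0)

lemma tsum_pi_int_eq_tsum_sum_fin (L : ℕ) [NeZero L] (f : (ι → ℤ) → ℝ≥0∞) :
    ∑' v, f v = ∑' a : ι → ℤ, ∑ b : ι → Fin L, f fun k => a k * L + b k := by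
  let e : (ι → ℤ) ≃ (ι → ℤ) × (ι → Fin L) :=
    (Equiv.piCongrRight fun _ => Int.divModEquiv L).trans (Equiv.arrowProdEquivProdArrow ι _ _)
  rw [← e.symm.tsum_eq, ENNReal.tsum_prod']
  exact tsum_congr fun a => tsum_fintype _

lemma natCast_mul_one_add_norm_le {L : ℕ} [NeZero L] (a : ι → ℤ) (b : ι → Fin L) :
    L * (1 + ‖a‖) ≤ 2 * (L + ‖fun k => a k * (L : ℤ) + (b k : ℤ)‖) := by
  set v : ι → ℤ := fun k => a k * L + b k
  have L_pos : (0 : ℝ) < L := Nat.cast_pos.mpr (NeZero.pos L)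
  have norm_a_le : ‖a‖ ≤ (‖v‖ + L) / L := by
    refine (pi_norm_le_iff_of_nonneg (by positivity)).mpr fun k => ?_
    rw [le_div_iff₀ L_pos]
    calc ‖a k‖ * L = ‖v k - (b k : ℤ)‖ := by simp [v, Int.norm_eq_abs]
      _ ≤ ‖v k‖ + ‖((b k : ℕ) : ℤ)‖ := norm_sub_le _ _
      _ ≤ ‖v‖ + L := add_le_add (norm_le_pi_norm v k) (by simp [(b k).is_lt.le])
  rw [le_div_iff₀ L_pos] at norm_a_le
  linarith [norm_nonneg v]

theorem tsum_add_norm_rpow_le {τ : ℝ} (hτ : Fintype.card ι < τ) :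
    ∃ C : ℝ, 0 < C ∧ ∀ (L : ℕ) [NeZero L],
      ∑' v : ι → ℤ, ENNReal.ofReal ((L + ‖v‖) ^ (-τ)) ≤
        ENNReal.ofReal (C * (L : ℝ) ^ (Fintype.card ι - τ)) := by
  have hτ0 : 0 ≤ τ := (Nat.cast_nonneg _).trans hτ.le
  have summable_a := summable_one_add_norm_rpow_pi_int hτ
  set S := ∑' a : ι → ℤ, (1 + ‖a‖) ^ (-τ)
  have S_pos : 0 < S := summable_a.tsum_pos (fun a => by positivity) 0 (by simp)
  refine ⟨2 ^ τ * S, by positivity, fun L _ => ?_⟩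
  have L_pos : (0 : ℝ) < L := Nat.cast_pos.mpr (NeZero.pos L)
  have term_le (a : ι → ℤ) (b : ι → Fin L) :
      (L + ‖fun k => a k * (L : ℤ) + (b k : ℤ)‖) ^ (-τ) ≤ (L / 2) ^ (-τ) * (1 + ‖a‖) ^ (-τ) := by
    rw [← Real.mul_rpow (by positivity) (by positivity)]
    refine Real.rpow_le_rpow_of_nonpos (by positivity) ?_ (neg_nonpos.mpr hτ0)
    linarith [natCast_mul_one_add_norm_le a b]
  calc ∑' v : ι → ℤ, ENNReal.ofReal ((L + ‖v‖) ^ (-τ))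
      ≤ ∑' a : ι → ℤ, ∑ _b : ι → Fin L,
          ENNReal.ofReal ((L / 2) ^ (-τ) * (1 + ‖a‖) ^ (-τ)) := by
        rw [tsum_pi_int_eq_tsum_sum_fin L]
        exact ENNReal.tsum_le_tsum fun a => Finset.sum_le_sum fun b _ =>
          ENNReal.ofReal_le_ofReal (term_le a b)
    _ = ENNReal.ofReal ((L : ℝ) ^ Fintype.card ι * ((L / 2) ^ (-τ) * S)) := by
        simp only [Finset.sum_const, Finset.card_univ, Fintype.card_fun, nsmul_eq_mul]
        rw [ENNReal.tsum_mul_left, ← ENNReal.ofReal_tsum_of_nonneg (fun a => by positivity)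
          (summable_a.mul_left _), tsum_mul_left, ← ENNReal.ofReal_natCast,
          ← ENNReal.ofReal_mul (by positivity), Nat.cast_pow, Fintype.card_fin]
    _ = ENNReal.ofReal (2 ^ τ * S * (L : ℝ) ^ (Fintype.card ι - τ)) := by
        rw [Real.div_rpow L_pos.le two_pos.le, Real.rpow_neg two_pos.le, sub_eq_add_neg,
          Real.rpow_add L_pos, Real.rpow_natCast, div_inv_eq_mul]
        ring_nf

end LatticeSums

section Cube

variable {ι : Type*} [Fintype ι] [DecidableEq ι] {c i j : ι → ℤ} {K N : ℕ}

/-- The discrete cube of radius `N` centered at `c`, written as the order interval over which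
`Mfr` sums. -/
noncomputable def cube (c : ι → ℤ) (N : ℕ) : Finset (ι → ℤ) :=
  Finset.Icc (fun k => c k - N) fun k => c k + N

lemma mem_cube : i ∈ cube c N ↔ ∀ k, |i k - c k| ≤ N := by
  simp only [cube, Finset.mem_Icc, Pi.le_def, ← forall_and, abs_le, neg_le_sub_iff_le_add,
    sub_le_iff_le_add, add_comm]

lemma mem_cube_iff_norm_sub_le : i ∈ cube c N ↔ ‖i - c‖ ≤ N := by
  simp only [mem_cube, pi_norm_le_iff_of_nonneg (Nat.cast_nonneg N), Pi.sub_apply,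
    Int.norm_eq_abs]
  norm_cast

lemma card_cube (c : ι → ℤ) (N : ℕ) : (cube c N).card = (2 * N + 1) ^ Fintype.card ι := by
  have card_side (k : ι) : (c k + N + 1 - (c k - N)).toNat = 2 * N + 1 := by lia
  simp only [cube, Pi.card_Icc, Int.card_Icc, card_side, Finset.prod_const, Finset.card_univ]

lemma norm_sub_le_of_mem_cube_of_mem_cube (hj : i ∈ cube j K) (hc : i ∈ cube c N) :
    ‖j - c‖ ≤ K + N := by
  rw [mem_cube_iff_norm_sub_le] at hj hc
  exact (norm_sub_le_norm_sub_add_norm_sub j i c).trans (add_le_add (norm_sub_rev j i ▸ hj) hc)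

lemma sum_cube_abs_le_min {b : (ι → ℤ) → ℝ} (b_le : ∀ i, |b i| ≤ 1)
    (b_supp : ∀ i ∉ cube c N, b i = 0) :
    ∑ i ∈ cube j K, |b i| ≤ min (2 * K + 1 : ℝ) (2 * N + 1) ^ Fintype.card ι := by
  have sum_le_card (d : ι → ℤ) (R : ℕ) :
      ∑ i ∈ cube d R, |b i| ≤ (2 * R + 1 : ℝ) ^ Fintype.card ι := by
    simpa [card_cube] using Finset.sum_le_card_nsmul (cube d R) _ 1 fun i _ => b_le i
  have sum_le_sum_supp : ∑ i ∈ cube j K, |b i| ≤ ∑ i ∈ cube c N, |b i| := by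
    rw [← Finset.sum_filter_ne_zero]
    refine Finset.sum_le_sum_of_subset_of_nonneg (fun i hi => ?_) fun i _ _ => abs_nonneg _
    exact not_imp_comm.mp (b_supp i) (abs_ne_zero.mp (Finset.mem_filter.mp hi).2)
  rcases min_choice (2 * K + 1 : ℝ) (2 * N + 1) with h | h <;> rw [h]
  exacts [sum_le_card j K, sum_le_sum_supp.trans (sum_le_card c N)]

end Cube

lemma rpow_sub_mul_min_pow_le {n : ℕ} {γ x y : ℝ} (hγ : 0 ≤ γ) (hx : 0 < x) (hy : 0 < y) :
    x ^ (γ - n) * min x y ^ n ≤ y ^ n * max x y ^ (γ - n) := by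
  rcases le_total x y with hxy | hyx
  · have rpow_sub_mul_pow {z : ℝ} (hz : 0 < z) : z ^ (γ - n) * z ^ n = z ^ γ := by
      rw [Real.rpow_sub_natCast hz.ne', div_mul_cancel₀ _ (by positivity)]
    rw [min_eq_left hxy, max_eq_right hxy, mul_comm (y ^ n), rpow_sub_mul_pow hx,
      rpow_sub_mul_pow hy]
    exact Real.rpow_le_rpow hx.le hxy hγ
  · rw [min_eq_right hyx, max_eq_left hyx, mul_comm]

section MaximalFunction

variable {n : ℕ} {γ : ℝ}

lemma Mfr_le (hγ : 0 ≤ γ) (hγn : γ ≤ n) {c : Fin n → ℤ} {N : ℕ} {b : (Fin n → ℤ) → ℝ}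
    (b_le : ∀ i, |b i| ≤ 1) (b_supp : ∀ i ∉ cube c N, b i = 0) (j : Fin n → ℤ) :
    Mfr γ b j ≤
      ENNReal.ofReal ((2 * N + 1) ^ n * ((2 * N + 1 + ‖j - c‖) / 2) ^ (γ - n)) := by
  refine iSup_le fun K => ENNReal.ofReal_le_ofReal ?_
  change (2 * K + 1 : ℝ) ^ (γ - n) * ∑ i ∈ cube j K, |b i| ≤ _
  by_cases disjoint_supp : ∀ i ∈ cube j K, b i = 0
  · rw [Finset.sum_eq_zero fun i hi => by rw [disjoint_supp i hi, abs_zero], mul_zero]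
    positivity
  push Not at disjoint_supp
  obtain ⟨i, hij, hbi⟩ := disjoint_supp
  have norm_le : ‖j - c‖ ≤ K + N :=
    norm_sub_le_of_mem_cube_of_mem_cube hij (not_imp_comm.mp (b_supp i) hbi)
  have side_le : (2 * N + 1 + ‖j - c‖) / 2 ≤ max (2 * K + 1 : ℝ) (2 * N + 1) := by
    linarith [le_max_left (2 * K + 1 : ℝ) (2 * N + 1), le_max_right (2 * K + 1 : ℝ) (2 * N + 1)]
  calc (2 * K + 1 : ℝ) ^ (γ - n) * ∑ i ∈ cube j K, |b i|
      ≤ (2 * K + 1) ^ (γ - n) * min (2 * K + 1 : ℝ) (2 * N + 1) ^ n := by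
        gcongr
        simpa only [Fintype.card_fin] using sum_cube_abs_le_min b_le b_supp
    _ ≤ (2 * N + 1) ^ n * max (2 * K + 1 : ℝ) (2 * N + 1) ^ (γ - n) :=
        rpow_sub_mul_min_pow_le hγ (by positivity) (by positivity)
    _ ≤ (2 * N + 1) ^ n * ((2 * N + 1 + ‖j - c‖) / 2) ^ (γ - n) := by
        refine mul_le_mul_of_nonneg_left ?_ (by positivity)
        exact Real.rpow_le_rpow_of_nonpos (by positivity) side_le (sub_nonpos.mpr hγn)

theorem tsum_Mfr_rpow_le {s : ℝ} (hγ : 0 ≤ γ) (hs : 0 < s) (hns : n < (n - γ) * s) :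
    ∃ C : ℝ, 0 < C ∧ ∀ (c : Fin n → ℤ) (N : ℕ) (b : (Fin n → ℤ) → ℝ),
      (∀ i, |b i| ≤ 1) → (∀ i ∉ cube c N, b i = 0) →
        ∑' j, Mfr γ b j ^ s ≤ ENNReal.ofReal (C * (2 * N + 1) ^ (n + γ * s)) := by
  have hγn : γ ≤ n := by
    linarith [pos_of_mul_pos_left (n.cast_nonneg.trans_lt hns) hs.le]
  set τ := (n - γ) * s with τ_def
  obtain ⟨C, C_pos, tsum_le⟩ := tsum_add_norm_rpow_le (ι := Fin n) (by rwa [Fintype.card_fin])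
  refine ⟨2 ^ τ * C, by positivity, fun c N b b_le b_supp => ?_⟩
  set L : ℝ := 2 * N + 1
  have L_pos : 0 < L := by positivity
  have Mfr_rpow_le (j : Fin n → ℤ) : Mfr γ b j ^ s ≤
      ENNReal.ofReal (L ^ (n * s) * 2 ^ τ) * ENNReal.ofReal ((L + ‖j - c‖) ^ (-τ)) := by
    refine (ENNReal.rpow_le_rpow (Mfr_le hγ hγn b_le b_supp j) hs.le).trans_eq ?_
    rw [ENNReal.ofReal_rpow_of_nonneg (by positivity) hs.le,
      Real.mul_rpow (by positivity) (by positivity), ← Real.rpow_natCast_mul L_pos.le,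
      ← Real.rpow_mul (by positivity), ← ENNReal.ofReal_mul (by positivity),
      show (γ - n) * s = -τ by rw [τ_def]; ring, Real.div_rpow (by positivity) two_pos.le,
      Real.rpow_neg two_pos.le, div_inv_eq_mul, mul_right_comm, mul_assoc]
  calc ∑' j, Mfr γ b j ^ s
      ≤ ENNReal.ofReal (L ^ (n * s) * 2 ^ τ) *
          ∑' j, ENNReal.ofReal ((L + ‖j - c‖) ^ (-τ)) := by
        rw [← ENNReal.tsum_mul_left]
        exact ENNReal.tsum_le_tsum Mfr_rpow_le
    _ = ENNReal.ofReal (L ^ (n * s) * 2 ^ τ) *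
          ∑' v : Fin n → ℤ, ENNReal.ofReal ((L + ‖v‖) ^ (-τ)) := by
        rw [← (Equiv.subRight c).tsum_eq fun v => ENNReal.ofReal ((L + ‖v‖) ^ (-τ))]
        rfl
    _ ≤ ENNReal.ofReal (L ^ (n * s) * 2 ^ τ) * ENNReal.ofReal (C * L ^ (n - τ)) := by
        gcongr
        simpa only [L, Fintype.card_fin, Nat.cast_add, Nat.cast_mul, Nat.cast_ofNat,
          Nat.cast_one] using tsum_le (2 * N + 1)
    _ = ENNReal.ofReal (2 ^ τ * C * L ^ (n + γ * s)) := by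
        rw [← ENNReal.ofReal_mul (by positivity),
          show n + γ * s = n * s + (n - τ) by rw [τ_def]; ring, Real.rpow_add L_pos]
        ring_nf

end MaximalFunction

theorem stmt12_general {n : ℕ} {α p q D : ℝ} (hα : 0 ≤ α) (hαp : α < n / p) (hD : n / p < D)
    (hq : 1 / q = 1 / p - α / n) :
    ∃ C : ℝ, 0 < C ∧ ∀ (i0 : Fin n → ℤ) (N : ℕ),
      (∑' j : Fin n → ℤ,
          (Mfr (α * n / D) (fun i => if ∀ t, |i t - i0 t| ≤ (N : ℤ) then (1 : ℝ) else 0) j)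
            ^ (q * D / n))
        ≤ ENNReal.ofReal (C * (((2 * (N : ℝ) + 1) ^ n) ^ (q / p))) := by
  have n_div_p_pos : 0 < n / p := hα.trans_lt hαp
  have p_ne : p ≠ 0 := by rintro rfl; simp at n_div_p_pos
  have n_ne : (n : ℝ) ≠ 0 := by intro h; simp [h] at n_div_p_pos
  have n_pos : (0 : ℝ) < n := by positivity
  have D_pos : 0 < D := n_div_p_pos.trans hD
  have n_div_q : n / q = n / p - α := by
    rw [div_eq_mul_one_div, hq, mul_sub, mul_one_div, mul_div_cancel₀ _ n_ne]
  have q_pos : 0 < q := (div_pos_iff_of_pos_left n_pos).mp (by linarith)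
  have exponent_eq : (n : ℝ) + α * n / D * (q * D / n) = n * (q / p) := by
    field_simp at n_div_q ⊢
    linarith
  have lt_exponent : (n : ℝ) < (n - α * n / D) * (q * D / n) := by
    calc (n : ℝ) = n / q * q := (div_mul_cancel₀ _ q_pos.ne').symm
      _ < (D - α) * q := by gcongr; linarith
      _ = (n - α * n / D) * (q * D / n) := by field_simp
  obtain ⟨C, C_pos, tsum_le⟩ := tsum_Mfr_rpow_le (by positivity) (by positivity) lt_exponent
  refine ⟨C, C_pos, fun i0 N => ?_⟩
  rw [← Real.rpow_natCast_mul (by positivity), ← exponent_eq]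
  exact tsum_le i0 N _ (fun i => by split_ifs <;> simp) fun i hi => if_neg (mt mem_cube.mpr hi)

lemma div_lt_add_floor_add_one (x p : ℝ) : x / p < x + ⌊x * (1 / p - 1)⌋₊ + 1 := by
  linarith [Nat.lt_floor_add_one (x * (1 / p - 1)), mul_one_div x p]

theorem stmt12 (n : ℕ) (hn : 1 ≤ n) (α : ℝ) (hα0 : 0 ≤ α) (hαn : α < n)
    (p : ℝ) (hp0 : 0 < p) (hp1 : p ≤ 1)
    (dp : ℕ) (hdp : dp = ⌊(n : ℝ) * (1 / p - 1)⌋₊)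
    (q : ℝ) (hq : 1 / q = 1 / p - α / n) :
    ∃ C : ℝ, 0 < C ∧ ∀ (i0 : Fin n → ℤ) (N : ℕ),
      (∑' j : Fin n → ℤ,
          (Mfr (α * n / ((n : ℝ) + dp + 1))
              (fun i => if ∀ t, |i t - i0 t| ≤ (N : ℤ) then (1 : ℝ) else 0) j)
            ^ (q * ((n : ℝ) + dp + 1) / n))
        ≤ ENNReal.ofReal (C * (((2 * (N : ℝ) + 1) ^ n) ^ (q / p))) :=
  stmt12_general hα0 (hαn.trans_le (le_div_self n.cast_nonneg hp0 hp1))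
    (hdp ▸ div_lt_add_floor_add_one n p) hq
end
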